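/- Let J ∈ M_n(ℂ) be a fundamental symmetry. If Ψ : M_n(ℂ) → M_n(ℂ) is completely J-positive, then Φ(A) = J Ψ(J A) is completely positive. If moreover Ψ is a quantum J-operator, then Φ is a quantum channel (completely positive and trace-preserving). -/

import Mathlib

/-!
Left multiplication by `𝒥_k` acts blockwise as left multiplication by `J`, so for
`Φ(A) = J Ψ(J A)` one has `Φ^k(C) = 𝒥_k Ψ^k(𝒥_k C)`. As `𝒥_k² = 1`, positivity of `C` is the
`𝒥_k`-positivity of `𝒥_k C`, and complete `J`-positivity of `Ψ` makes `Φ^k(C)` positive.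
-/

open Matrix
open scoped ComplexOrder

/-- A fundamental symmetry: `Jᴴ = J` and `J² = 1`. -/
def IsFundamentalSymmetry {n : ℕ} (J : Matrix (Fin n) (Fin n) ℂ) : Prop :=
  Jᴴ = J ∧ J * J = 1

/-- The `J`-adjoint `M^♮ = J Mᴴ J`. -/
noncomputable def jAdj {n : ℕ} (J M : Matrix (Fin n) (Fin n) ℂ) : Matrix (Fin n) (Fin n) ℂ :=
  J * Mᴴ * J

/-- The `k`-th block map `Φ^k` acting on `k × k` block matrices with `n × n` blocks:
`Φ` is applied to each block. Block `(a, b)` of `C` is the matrix `(i, j) ↦ C (i, a) (j, b)`. -/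
def blockMap {n : ℕ} (Φ : Matrix (Fin n) (Fin n) ℂ → Matrix (Fin n) (Fin n) ℂ) (k : ℕ)
    (C : Matrix (Fin n × Fin k) (Fin n × Fin k) ℂ) :
    Matrix (Fin n × Fin k) (Fin n × Fin k) ℂ :=
  Matrix.of fun p q => Φ (Matrix.of fun i j => C (i, p.2) (j, q.2)) p.1 q.1

/-- The block-diagonal fundamental symmetry `𝒥_k` with `k` diagonal copies of `J`. -/
def Jblock {n : ℕ} (J : Matrix (Fin n) (Fin n) ℂ) (k : ℕ) :
    Matrix (Fin n × Fin k) (Fin n × Fin k) ℂ :=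
  Matrix.blockDiagonal fun _ : Fin k => J

/-- `Φ` is completely positive: every block map `Φ^k` preserves positive semidefiniteness. -/
def CompletelyPositive {n : ℕ}
    (Φ : Matrix (Fin n) (Fin n) ℂ → Matrix (Fin n) (Fin n) ℂ) : Prop :=
  ∀ (k : ℕ) (C : Matrix (Fin n × Fin k) (Fin n × Fin k) ℂ),
    C.PosSemidef → (blockMap Φ k C).PosSemidef

/-- `Ψ` is completely `J`-positive: every block map `Ψ^k` maps `𝒥_k`-positive matrices
to `𝒥_k`-positive matrices. -/
def CompletelyJPositive {n : ℕ} (J : Matrix (Fin n) (Fin n) ℂ)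
    (Ψ : Matrix (Fin n) (Fin n) ℂ → Matrix (Fin n) (Fin n) ℂ) : Prop :=
  ∀ (k : ℕ) (C : Matrix (Fin n × Fin k) (Fin n × Fin k) ℂ),
    (Jblock J k * C).PosSemidef → (Jblock J k * blockMap Ψ k C).PosSemidef

theorem Jblock_mul_apply {n k : ℕ} (J : Matrix (Fin n) (Fin n) ℂ)
    (C : Matrix (Fin n × Fin k) (Fin n × Fin k) ℂ) (i j : Fin n) (a b : Fin k) :
    (Jblock J k * C) (i, a) (j, b) = (J * Matrix.of fun i j => C (i, a) (j, b)) i j := by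
  simp [Jblock, Matrix.mul_apply, Matrix.blockDiagonal_apply, Fintype.sum_prod_type, ite_mul]

theorem Jblock_mul_self {n : ℕ} {J : Matrix (Fin n) (Fin n) ℂ} (hJ : J * J = 1) (k : ℕ) :
    Jblock J k * Jblock J k = 1 := by
  rw [Jblock, ← Matrix.blockDiagonal_mul]
  simp only [hJ]
  exact Matrix.blockDiagonal_one

theorem blockMap_conj {n : ℕ} (J : Matrix (Fin n) (Fin n) ℂ)
    (Ψ : Matrix (Fin n) (Fin n) ℂ → Matrix (Fin n) (Fin n) ℂ) (k : ℕ)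
    (C : Matrix (Fin n × Fin k) (Fin n × Fin k) ℂ) :
    blockMap (fun A => J * Ψ (J * A)) k C = Jblock J k * blockMap Ψ k (Jblock J k * C) := by
  ext ⟨i, a⟩ ⟨j, b⟩
  rw [Jblock_mul_apply]
  simp only [blockMap, Matrix.of_apply, Jblock_mul_apply]
  rfl

/-- If `Ψ` is completely `J`-positive then `Φ(A) = J Ψ(J A)` is completely positive;
if moreover `Ψ` is a quantum `J`-operator (i.e. `A ↦ J Ψ(J A)` is trace-preserving),
then `Φ` is a quantum channel (completely positive and trace-preserving). -/
theorem completelyPositive_of_completelyJPositive {n : ℕ}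
    (J : Matrix (Fin n) (Fin n) ℂ) (hJ : IsFundamentalSymmetry J)
    (Ψ : Matrix (Fin n) (Fin n) ℂ →ₗ[ℂ] Matrix (Fin n) (Fin n) ℂ)
    (hΨ : CompletelyJPositive J (⇑Ψ)) :
    CompletelyPositive (fun A => J * Ψ (J * A)) ∧
    ((∀ A : Matrix (Fin n) (Fin n) ℂ, (J * Ψ (J * A)).trace = A.trace) →
      (CompletelyPositive (fun A => J * Ψ (J * A)) ∧
       ∀ A : Matrix (Fin n) (Fin n) ℂ, (J * Ψ (J * A)).trace = A.trace)) := by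
  have hcp : CompletelyPositive (fun A => J * Ψ (J * A)) := by
    intro k C hC
    rw [blockMap_conj J (⇑Ψ) k C]
    apply hΨ
    rwa [← Matrix.mul_assoc, Jblock_mul_self hJ.2, Matrix.one_mul]
  exact ⟨hcp, fun htr => ⟨hcp, htr⟩⟩
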